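/- In the quotient group G_1 = U/N_1, the image of the element a^{-2} c^2 (a^2 b)^2 (a^{-1} c)^2 of U has order 2; in particular it is non-trivial. -/

import Mathlib

/-- The defining relators of the group `U` on generators `a, b, c` (indexed `0, 1, 2`):
`a^4, b^4, c^4, (ab)^2, (bc)^2, (abc)^2, (a^2b^2)^4, a^2c^2b^2(ac)^2, [a,c⁻¹]b^2`,
where `[x,y] = x⁻¹y⁻¹xy`. -/
def Urels : Set (FreeGroup (Fin 3)) :=
  {(FreeGroup.of 0) ^ 4, (FreeGroup.of 1) ^ 4, (FreeGroup.of 2) ^ 4,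
   (FreeGroup.of 0 * FreeGroup.of 1) ^ 2,
   (FreeGroup.of 1 * FreeGroup.of 2) ^ 2,
   (FreeGroup.of 0 * FreeGroup.of 1 * FreeGroup.of 2) ^ 2,
   ((FreeGroup.of 0) ^ 2 * (FreeGroup.of 1) ^ 2) ^ 4,
   (FreeGroup.of 0) ^ 2 * (FreeGroup.of 2) ^ 2 * (FreeGroup.of 1) ^ 2 *
     (FreeGroup.of 0 * FreeGroup.of 2) ^ 2,
   (FreeGroup.of 0)⁻¹ * FreeGroup.of 2 * FreeGroup.of 0 * (FreeGroup.of 2)⁻¹ *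
     (FreeGroup.of 1) ^ 2}

/-- The finitely presented group `U`. -/
abbrev UGroup : Type := PresentedGroup Urels

/-- The generator `a` of `U`. -/
def Ua : UGroup := PresentedGroup.of 0

/-- The generator `b` of `U`. -/
def Ub : UGroup := PresentedGroup.of 1

/-- The generator `c` of `U`. -/
def Uc : UGroup := PresentedGroup.of 2

/-- The element `x = (ac⁻¹)^4` of `U`. -/
def Ux : UGroup := (Ua * Uc⁻¹) ^ 4

/-- The element `y = (c⁻¹a)^4` of `U`. -/
def Uy : UGroup := (Uc⁻¹ * Ua) ^ 4

/-- A rewriting step `(position, equation index, direction)`; it does nothing if not applicable. -/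
def rwStep (eqs : List (List Nat × List Nat)) (w : List Nat) (s : Nat × Nat × Nat) : List Nat :=
  let e := eqs.getD s.2.1 ([], [])
  let l := if s.2.2 = 1 then e.1 else e.2
  let r := if s.2.2 = 1 then e.2 else e.1
  if (w.drop s.1).take l.length = l then w.take s.1 ++ (r ++ (w.drop s.1).drop l.length) else w

def rwRun (eqs : List (List Nat × List Nat)) (t : List Nat × List (Nat × Nat × Nat)) :
    List (List Nat × List Nat) :=
  eqs ++ [(t.1, t.2.foldl (rwStep eqs) t.1)]

/-- Letters: `a, a⁻¹, b, b⁻¹, c, c⁻¹` are `0, ..., 5`. -/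
def evL {G : Type*} [Group G] (a b c : G) : Nat → G
  | 0 => a
  | 1 => a⁻¹
  | 2 => b
  | 3 => b⁻¹
  | 4 => c
  | _ => c⁻¹

def evW {G : Type*} [Group G] (f : Nat → G) (w : List Nat) : G := (w.map f).prod

def Holds {G : Type*} [Group G] (f : Nat → G) (eqs : List (List Nat × List Nat)) : Prop :=
  ∀ e ∈ eqs, evW f e.1 = evW f e.2

theorem rwStep_sound {G : Type*} [Group G] (f : Nat → G) (eqs) (h : Holds f eqs) (w s) :
    evW f (rwStep eqs w s) = evW f w := by
  have he : evW f (eqs.getD s.2.1 ([], [])).1 = evW f (eqs.getD s.2.1 ([], [])).2 := by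
    by_cases hk : s.2.1 < eqs.length
    · rw [List.getD_eq_getElem _ _ hk]
      exact h _ (List.getElem_mem hk)
    · rw [List.getD_eq_default _ _ (by omega)]
  have key : ∀ l r : List Nat, evW f l = evW f r → evW f (if (w.drop s.1).take l.length = l then
      w.take s.1 ++ (r ++ (w.drop s.1).drop l.length) else w) = evW f w := by
    intro l r hlr
    split_ifs with hw
    · have h2 : w = w.take s.1 ++ (l ++ (w.drop s.1).drop l.length) := by
        conv_lhs => rw [← List.take_append_drop s.1 w, ← List.take_append_drop l.length (w.drop s.1), hw]
      conv_rhs => rw [h2]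
      simp only [evW, List.map_append, List.prod_append] at hlr ⊢
      rw [hlr]
    · rfl
  unfold rwStep
  by_cases hd : s.2.2 = 1
  · simp only [hd, if_true]
    exact key _ _ he
  · simp only [hd, if_false]
    exact key _ _ he.symm

theorem rwRun_sound {G : Type*} [Group G] (f : Nat → G) (eqs) (h : Holds f eqs) (t) :
    Holds f (rwRun eqs t) := by
  intro e he
  rw [rwRun, List.mem_append] at he
  rcases he with he | he
  · exact h e he
  · rw [List.mem_singleton] at he
    subst he
    have : ∀ (ch : List (Nat × Nat × Nat)) (w : List Nat),
        evW f (ch.foldl (rwStep eqs) w) = evW f w := by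
      intro ch
      induction ch with
      | nil => intro w; rfl
      | cons s ch ih => intro w; rw [List.foldl_cons, ih, rwStep_sound f eqs h]
    exact (this _ _).symm

theorem rwAll_sound {G : Type*} [Group G] (f : Nat → G) (ts) : ∀ (eqs) (_ : Holds f eqs),
    Holds f (List.foldl rwRun eqs ts) := by
  induction ts with
  | nil => intro eqs h; exact h
  | cons t ts ih => intro eqs h; exact ih _ (rwRun_sound f eqs h t)

/-- Trivial cancellations, the relators of `U`, and the words `x`, `y`. -/
def baseEqs : List (List Nat × List Nat) :=
  [([0,1], []),
   ([1,0], []),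
   ([2,3], []),
   ([3,2], []),
   ([4,5], []),
   ([5,4], []),
   ([0,0,0,0], []),
   ([2,2,2,2], []),
   ([4,4,4,4], []),
   ([0,2,0,2], []),
   ([2,4,2,4], []),
   ([0,2,4,0,2,4], []),
   ([0,0,2,2,0,0,2,2,0,0,2,2,0,0,2,2], []),
   ([0,0,4,4,2,2,0,4,0,4], []),
   ([1,4,0,5,2,2], []),
   ([0,5,0,5,0,5,0,5], []),
   ([5,0,5,0,5,0,5,0], [])]

/-- Derivation of the square being trivial: each entry derives a new equation. -/
def cert : List (List Nat × List (Nat × Nat × Nat)) :=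
  [([0,0,0], [(3,0,0),(0,6,1)]),
   ([1,1], [(0,17,0),(2,0,1)]),
   ([2,2,2], [(3,2,0),(0,7,1)]),
   ([3,3], [(0,19,0),(2,2,1)]),
   ([4,4,4], [(3,4,0),(0,8,1)]),
   ([5,5], [(0,21,0),(2,4,1)]),
   ([2,0,2], [(0,1,0),(1,9,1)]),
   ([2,0], [(2,2,0),(0,23,1)]),
   ([3,1], [(1,23,0),(0,3,1)]),
   ([3,0,0], [(1,18,0),(0,25,1)]),
   ([3,0,2], [(1,25,0),(0,20,1)]),
   ([2,2,1,3], [(2,24,0),(0,19,1)]),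
   ([4,2,4], [(0,3,0),(1,10,1)]),
   ([4,2], [(2,4,0),(0,29,1)]),
   ([4,1,3], [(1,24,0),(0,30,1)]),
   ([5,3], [(1,29,0),(0,5,1)]),
   ([5,2,2], [(1,20,0),(0,32,1)]),
   ([5,2,4], [(1,32,0),(0,22,1)]),
   ([5,0,2], [(1,25,0),(0,32,1)]),
   ([4,4,3,5], [(2,30,0),(0,21,1)]),
   ([4,1,2,2], [(2,20,0),(0,31,1)]),
   ([4,4,3,4,4], [(0,34,0),(2,21,1)]),
   ([2,4,0,2,4], [(0,1,0),(1,11,1)]),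
   ([4,0,2,4], [(0,3,0),(1,39,1),(0,25,1)]),
   ([4,0,2], [(3,4,0),(0,40,1)]),
   ([0,2,2,4], [(2,32,0),(0,41,0),(2,2,1)]),
   ([2,4,1,5], [(0,35,0),(1,41,0),(0,5,1)]),
   ([0,2,5,0], [(0,41,0),(2,24,1),(1,0,1)]),
   ([2,4,1], [(0,35,0),(1,40,0),(0,5,1)]),
   ([2,2,1,4], [(0,27,0),(1,45,0),(0,3,1)]),
   ([4,0,5], [(2,2,0),(3,30,0),(0,40,1)]),
   ([4,0,4,4], [(2,22,0),(0,47,1)]),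
   ([2,2,4], [(0,1,0),(1,42,1)]),
   ([4,1,4,0], [(1,49,0),(0,30,1),(1,34,1)]),
   ([2,1,4,0], [(1,49,0),(0,19,1)]),
   ([5,1,4,0], [(1,49,0),(0,33,1)]),
   ([2,4,0], [(1,42,0),(0,24,1),(1,3,1)]),
   ([5,1,2,4], [(1,53,0),(0,34,1)]),
   ([2,1,2,4], [(1,53,0),(0,49,1)]),
   ([4,1,5], [(0,3,0),(1,43,1),(0,27,1)]),
   ([2,5,0], [(0,1,0),(1,44,1)]),
   ([4,1,4,3], [(1,57,0),(0,30,1),(1,22,1)]),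
   ([2,4,3], [(1,44,0),(0,24,1),(1,3,1)]),
   ([2,1,5,0], [(1,59,0),(0,49,1)]),
   ([3,4,1], [(0,19,0),(2,45,1),(1,24,1),(2,3,1)]),
   ([5,2,1,4], [(1,61,0),(0,32,1)]),
   ([5,0,3], [(0,2,0),(1,37,0),(0,45,1),(2,30,1),(1,2,1)]),
   ([5,0,0,2], [(2,25,0),(0,63,1)]),
   ([4,1,2], [(0,46,0),(3,30,1),(0,28,1)]),
   ([4,0,0,3], [(1,18,0),(2,24,0),(0,65,1)]),
   ([4,0,4,3,5], [(3,30,0),(0,48,1)]),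
   ([4,0,0,4,0], [(1,18,0),(2,49,0),(0,37,1),(1,63,1),(2,34,1)]),
   ([5,0,0,5,0], [(1,18,0),(2,59,0),(0,54,1)]),
   ([2,1,4,4,3], [(0,61,0),(1,58,1),(0,20,1),(0,49,1)]),
   ([4,0,0,2], [(0,42,0),(3,41,1),(2,24,1),(3,3,1)]),
   ([5,0,4,1], [(2,46,0),(0,35,1),(0,45,1),(2,30,1),(1,2,1)]),
   ([5,0,5,1,4], [(1,72,0),(0,22,1)]),
   ([2,4,4,3], [(1,2,0),(2,50,0),(0,49,1),(2,0,1)]),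
   ([5,1,4,4,0], [(1,74,0),(0,34,1)]),
   ([2,4,4,0], [(0,32,0),(1,51,0),(2,55,0),(0,33,1),(2,25,1),(1,41,1),(0,24,1),(1,3,1),(1,34,1)]),
   ([4,0,4,3,4,4], [(4,22,0),(0,67,1)]),
   ([2,1,4,3,5,2], [(3,30,0),(4,20,0),(0,70,1)]),
   ([4,4,3,0,4,3,5], [(0,54,0),(3,36,1)]),
   ([2,1,3,0,4,4,3], [(2,68,0),(0,51,1)]),
   ([4,0,4,3,4,3,5], [(5,30,0),(0,77,1)]),
   ([2,1,4,3,5,1,3], [(5,24,0),(0,78,1)]),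
   ([4,0,4,3,4,3,4,4], [(6,22,0),(0,81,1)]),
   ([5,0,5,0,5,0,5], [(0,1,0),(1,15,1)]),
   ([0,5,0,5,0,5], [(0,4,0),(1,84,1)]),
   ([5,0,5,0,5], [(0,1,0),(1,85,1)]),
   ([4,1,4,1], [(1,86,0),(0,4,1)]),
   ([0,5,0,5,0], [(0,87,0),(3,1,1)]),
   ([3,5,0,5,0], [(0,31,0),(2,31,0),(0,87,1),(3,32,1),(1,35,1),(1,45,1)]),
   ([3,0,5,2,1], [(0,65,0),(2,56,0),(0,87,1),(3,22,1)]),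
   ([5,0,5,0], [(4,5,0),(0,86,1)]),
   ([5,0,4,4,0], [(0,0,0),(1,59,0),(3,58,0),(0,45,0),(0,35,0),(2,35,0),(4,33,0),(0,86,1),(1,65,1)]),
   ([5,1,3,0,5,2], [(1,92,0),(0,22,1),(1,48,1),(0,41,1),(3,57,1)]),
   ([2,1,3,0,5,2], [(1,92,0),(0,57,1)]),
   ([4,0,0,4,1], [(1,18,0),(2,86,0),(0,56,1),(2,1,1),(1,57,1)]),
   ([3,0,4,4,3,0], [(0,68,0),(4,18,0),(0,95,1)]),
   ([3,0,5,0,0,5], [(0,66,0),(3,65,0),(0,95,1),(0,78,1)]),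
   ([4,0,3,5,0], [(0,0,0),(1,60,0),(0,26,0),(2,88,1)]),
   ([3,5,0,5,1], [(4,17,0),(0,89,1),(2,76,1),(1,0,1)]),
   ([3,4,4,0,4,1], [(1,73,0),(0,99,1)]),
   ([5,1,3,5,0], [(1,24,0),(0,36,0),(2,89,1),(1,71,1),(4,5,1),(0,41,1)]),
   ([3,5,0,4,3], [(0,31,0),(0,46,0),(0,27,0),(2,52,0),(3,60,0),(0,90,1),(4,4,1)]),
   ([3,0,5,0,4,0], [(1,102,0),(0,20,1),(1,57,1)]),
   ([1,4,3,4,4,0,4], [(0,94,0),(4,34,1),(0,80,1)]),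
   ([3,4,3,0,4,1,4], [(2,98,0),(4,31,0),(0,100,1)]),
   ([3,4,3,0,4,1], [(6,4,0),(0,105,1),(1,79,1)]),
   ([3,4,3,0,3,0,5], [(4,65,0),(0,106,1),(4,33,1),(3,49,1),(2,18,1)]),
   ([1,4,0,4,0,3,0,4,0], [(0,82,0),(0,96,0),(2,69,0),(0,66,0),(3,103,1),(0,71,1)]),
   ([3,4,3,4,0,4,0], [(2,104,0),(0,61,1),(2,38,1),(3,57,1)]),
   ([0,0,4,3,5,1,3,4,0,4], [(3,30,0),(5,24,0),(0,13,1)]),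
   ([2,1,5,1,4,3,4,3], [(0,109,0),(3,0,0),(4,97,0),(0,107,1),(6,26,1),(4,71,1),(2,17,1)]),
   ([4,0,4,0,3,0,4,0], [(0,0,0),(1,108,1),(2,111,1),(0,17,1)]),
   ([2,1,5,1,2,1,5,1,5], [(1,112,0),(0,53,1),(1,76,1),(0,18,1),(4,20,1),(5,24,1),(3,30,1)]),
   ([2,1,5,1,2,1,5,1], [(8,5,0),(0,113,1),(0,110,1)]),
   ([2,1,5,1,2,1,5], [(7,1,0),(0,114,1)]),
   ([1,5,1,2,1,5], [(0,3,0),(1,115,1)]),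
   ([5,1,2,1,5], [(0,0,0),(1,116,1)]),
   ([4,0,3,0], [(1,117,0),(0,4,1)]),
   ([1,2,1,5,1], [(0,118,0),(3,0,1)]),
   ([1,5,0,4,3,0], [(0,59,0),(0,52,0),(2,118,1),(1,18,1),(0,64,1),(3,18,1),(2,24,1)]),
   ([2,1,5,1], [(0,0,0),(1,119,1)]),
   ([0,0,2,5,1,4,3], [(1,93,0),(0,120,0),(4,27,1),(3,30,1),(1,63,1),(0,1,1)]),
   ([5,2,5,2,1], [(0,122,0),(4,57,0),(1,41,0),(3,20,0),(0,121,0),(2,101,1),(1,1,1)]),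
   ([5,2,5,2], [(4,1,0),(0,123,1),(2,52,1),(0,19,1)]),
   ([1,1,4,4,0,0,2,0,0,2,1,4,1,4,1,1,4,4,0,0,2,0,0,2,1,4,1,4], [(0,18,1),(14,18,1),(6,24,1),(5,0,1),(18,24,1),(17,0,1),(5,27,1),(7,18,1),(6,24,1),(17,27,1),(19,18,1),(18,24,1),(3,41,1),(2,41,1),(4,22,1),(0,17,1),(3,31,1),(13,41,1),(12,41,1),(14,22,1),(10,17,1),(13,31,1),(1,59,1),(0,18,1),(11,59,1),(10,18,1),(7,50,1),(2,91,1),(1,0,1),(1,50,1),(4,20,1),(3,30,1),(4,34,1),(10,91,1),(9,0,1),(8,61,1),(7,30,1),(6,20,1),(5,30,1),(8,75,1),(6,34,1),(12,61,1),(11,30,1),(10,20,1),(9,30,1),(8,20,1),(7,30,1),(8,124,1),(11,4,1),(7,20,1),(10,25,1),(6,30,1),(5,20,1),(4,30,1),(3,20,1),(2,30,1),(1,20,1),(7,34,1),(9,27,1),(8,30,1),(5,34,1),(7,20,1),(6,30,1),(3,34,1),(5,20,1),(4,30,1),(1,49,1),(0,0,1),(7,62,1),(5,33,1),(3,33,1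),(2,3,1),(0,83,1),(3,124,1),(2,2,1),(4,4,1),(3,25,1),(2,41,1),(4,5,1),(1,24,1),(0,0,1),(0,3,1)])]

theorem cert_ok : ([1,1,4,4,0,0,2,0,0,2,1,4,1,4,1,1,4,4,0,0,2,0,0,2,1,4,1,4], []) ∈ cert.foldl rwRun baseEqs := by
  decide +kernel

theorem square_trivial {G : Type*} [Group G] (a b c : G)
    (h1 : a ^ 4 = 1) (h2 : b ^ 4 = 1) (h3 : c ^ 4 = 1) (h4 : (a * b) ^ 2 = 1)
    (h5 : (b * c) ^ 2 = 1) (h6 : (a * b * c) ^ 2 = 1) (h7 : (a ^ 2 * b ^ 2) ^ 4 = 1)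
    (h8 : a ^ 2 * c ^ 2 * b ^ 2 * (a * c) ^ 2 = 1)
    (h9 : a⁻¹ * c * a * c⁻¹ * b ^ 2 = 1)
    (h10 : (a * c⁻¹) ^ 4 = 1) (h11 : (c⁻¹ * a) ^ 4 = 1) :
    (a⁻¹ ^ 2 * c ^ 2 * (a ^ 2 * b) ^ 2 * (a⁻¹ * c) ^ 2) ^ 2 = 1 := by
  have hb : Holds (evL a b c) baseEqs := by
    simp only [pow_succ, pow_zero, one_mul, mul_assoc] at h1 h2 h3 h4 h5 h6 h7 h8 h9 h10 h11
    intro e he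
    simp only [baseEqs, List.mem_cons, List.not_mem_nil, or_false] at he
    rcases he with rfl | rfl | rfl | rfl | rfl | rfl | rfl | rfl | rfl | rfl | rfl | rfl | rfl | rfl | rfl | rfl | rfl <;>
      simp only [evW, evL, List.map_cons, List.map_nil, List.prod_cons, List.prod_nil, mul_one,
        mul_inv_cancel, inv_mul_cancel] <;> assumption
  have := rwAll_sound (evL a b c) cert baseEqs hb _ cert_ok
  simp only [evW, evL, List.map_cons, List.map_nil, List.prod_cons, List.prod_nil, mul_one] at this
  simpa only [pow_succ, pow_zero, one_mul, mul_assoc] using this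

def tbl (l : List Nat) (i : Fin 64) : Fin 64 := Fin.ofNat 64 (l.getD i.val 0)

def mkP (l l' : List Nat) (h : ∀ i, tbl l' (tbl l i) = i) (h' : ∀ i, tbl l (tbl l' i) = i) :
    Equiv.Perm (Fin 64) := ⟨tbl l, tbl l', h, h'⟩

def la : List Nat :=
    [5, 2, 28, 4, 23, 8, 27, 0, 7, 30, 1, 13, 18, 14, 45, 48, 53, 16, 52, 6, 15, 35, 21, 41,
    12, 63, 25, 54, 10, 37, 36, 38, 31, 32, 22, 34, 51, 50, 33, 58, 39, 3, 29, 49, 43, 11, 59,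
    56, 62, 61, 42, 9, 24, 55, 19, 17, 46, 40, 57, 47, 26, 44, 20, 60]

def lai : List Nat :=
    [7, 10, 1, 41, 3, 0, 19, 8, 5, 51, 28, 45, 24, 11, 13, 20, 17, 55, 12, 54, 62, 22, 34, 4,
    52, 26, 60, 6, 2, 42, 9, 32, 33, 38, 35, 21, 30, 29, 31, 40, 57, 23, 50, 44, 61, 14, 56,
    59, 15, 43, 37, 36, 18, 16, 27, 53, 47, 58, 39, 46, 63, 49, 48, 25]

def pa : Equiv.Perm (Fin 64) := mkP la lai (by decide +kernel) (by decide +kernel)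

def lb : List Nat :=
    [1, 10, 7, 2, 5, 51, 11, 8, 3, 0, 9, 56, 13, 19, 24, 14, 15, 47, 12, 18, 25, 44, 34, 42,
    16, 46, 39, 53, 41, 4, 28, 30, 35, 43, 33, 37, 32, 36, 23, 40, 59, 31, 49, 22, 61, 20, 45,
    57, 17, 38, 21, 29, 54, 52, 27, 6, 55, 48, 60, 26, 63, 50, 58, 62]

def lbi : List Nat :=
    [9, 0, 3, 8, 29, 4, 55, 2, 7, 10, 1, 6, 18, 12, 15, 16, 24, 48, 19, 13, 45, 50, 43, 38,
    14, 20, 59, 54, 30, 51, 31, 41, 36, 34, 22, 32, 37, 35, 49, 26, 39, 28, 23, 33, 21, 46,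
    25, 17, 57, 42, 61, 5, 53, 27, 52, 56, 11, 47, 62, 40, 58, 44, 63, 60]

def pb : Equiv.Perm (Fin 64) := mkP lb lbi (by decide +kernel) (by decide +kernel)

def lc : List Nat :=
    [12, 29, 8, 3, 0, 6, 5, 15, 46, 13, 38, 4, 11, 9, 2, 44, 20, 60, 17, 10, 21, 61, 23, 1,
    25, 24, 27, 37, 28, 22, 52, 39, 26, 62, 51, 35, 54, 32, 47, 36, 41, 30, 43, 63, 45, 7, 14,
    19, 42, 57, 50, 55, 40, 59, 31, 58, 18, 49, 34, 53, 56, 16, 33, 48]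

def lci : List Nat :=
    [4, 23, 14, 3, 11, 6, 5, 45, 2, 13, 19, 12, 0, 9, 46, 7, 61, 18, 56, 47, 16, 20, 29, 22,
    25, 24, 32, 26, 28, 1, 41, 54, 37, 62, 58, 35, 39, 27, 10, 31, 52, 40, 48, 42, 15, 44, 8,
    38, 63, 57, 50, 34, 30, 59, 36, 51, 60, 49, 55, 53, 17, 21, 33, 43]

def pc : Equiv.Perm (Fin 64) := mkP lc lci (by decide +kernel) (by decide +kernel)

def pgen : Fin 3 → Equiv.Perm (Fin 64) := ![pa, pb, pc]

theorem pgen_rels : ∀ r ∈ Urels, FreeGroup.lift pgen r = 1 := by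
  intro r hr
  simp only [Urels, Set.mem_insert_iff, Set.mem_singleton_iff] at hr
  rcases hr with rfl | rfl | rfl | rfl | rfl | rfl | rfl | rfl | rfl <;>
    simp only [map_mul, map_pow, map_inv, FreeGroup.lift_apply_of, pgen, Matrix.cons_val] <;>
    decide +kernel

def phi : UGroup →* Equiv.Perm (Fin 64) := PresentedGroup.toGroup pgen_rels

theorem phi_a : phi Ua = pa := PresentedGroup.toGroup.of pgen_rels
theorem phi_b : phi Ub = pb := PresentedGroup.toGroup.of pgen_rels
theorem phi_c : phi Uc = pc := PresentedGroup.toGroup.of pgen_rels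

theorem U_rel {r : FreeGroup (Fin 3)} (hr : r ∈ Urels) : PresentedGroup.mk Urels r = 1 :=
  PresentedGroup.one_of_mem hr

/-- In `G_1 = U / N_1` with `N_1 = ⟨x, y⟩`, the image of `a⁻² c² (a² b)² (a⁻¹ c)²`
has order `2`; in particular it is non-trivial. -/
theorem image_order_two
    (hnorm : (Subgroup.closure {Ux, Uy} : Subgroup UGroup).Normal) :
    haveI := hnorm
    orderOf (QuotientGroup.mk (Ua⁻¹ ^ 2 * Uc ^ 2 * (Ua ^ 2 * Ub) ^ 2 * (Ua⁻¹ * Uc) ^ 2) :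
        UGroup ⧸ (Subgroup.closure {Ux, Uy} : Subgroup UGroup)) = 2 ∧
    (QuotientGroup.mk (Ua⁻¹ ^ 2 * Uc ^ 2 * (Ua ^ 2 * Ub) ^ 2 * (Ua⁻¹ * Uc) ^ 2) :
        UGroup ⧸ (Subgroup.closure {Ux, Uy} : Subgroup UGroup)) ≠ 1 := by
  have hne : (QuotientGroup.mk (Ua⁻¹ ^ 2 * Uc ^ 2 * (Ua ^ 2 * Ub) ^ 2 * (Ua⁻¹ * Uc) ^ 2) :
        UGroup ⧸ (Subgroup.closure {Ux, Uy} : Subgroup UGroup)) ≠ 1 := by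
    rw [Ne, QuotientGroup.eq_one_iff]
    intro hmem
    have hle : (Subgroup.closure {Ux, Uy} : Subgroup UGroup) ≤ phi.ker := by
      rw [Subgroup.closure_le]
      rintro z (rfl | rfl)
      · change phi Ux = 1
        simp only [Ux, map_mul, map_pow, map_inv, phi_a, phi_c]
        decide +kernel
      · change phi Uy = 1
        simp only [Uy, map_mul, map_pow, map_inv, phi_a, phi_c]
        decide +kernel
    have h := MonoidHom.mem_ker.1 (hle hmem)
    simp only [map_mul, map_pow, map_inv, phi_a, phi_b, phi_c] at h
    revert h
    decide +kernel
  refine ⟨?_, hne⟩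
  have hx : Ux ∈ (Subgroup.closure {Ux, Uy} : Subgroup UGroup) :=
    Subgroup.subset_closure (by simp)
  have hy : Uy ∈ (Subgroup.closure {Ux, Uy} : Subgroup UGroup) :=
    Subgroup.subset_closure (by simp)
  refine orderOf_eq_prime ?_ hne
  set π := QuotientGroup.mk' (Subgroup.closure {Ux, Uy} : Subgroup UGroup) with hπ
  have hr : ∀ r ∈ Urels, π (PresentedGroup.mk Urels r) = 1 := by
    intro r hr
    rw [U_rel hr, map_one]
  have hx' : π Ux = 1 := (QuotientGroup.eq_one_iff _).2 hx
  have hy' : π Uy = 1 := (QuotientGroup.eq_one_iff _).2 hy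
  have key := square_trivial (π Ua) (π Ub) (π Uc)
    (hr _ (by simp [Urels])) (hr _ (by simp [Urels])) (hr _ (by simp [Urels]))
    (hr _ (by simp [Urels])) (hr _ (by simp [Urels])) (hr _ (by simp [Urels]))
    (hr _ (by simp [Urels])) (hr _ (by simp [Urels])) (hr _ (by simp [Urels]))
    hx' hy'
  exact key
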